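/- arXiv:1212.1891 — 2 statements merged into one kernel-verified Lean document; each statement's English description precedes it below -/
import Mathlib

section
/- Let Ω be a finite nonempty type, let I be a finite type, and for each i : I let B i be a finite subset of Ω satisfying 3 · |B i| ≤ |Ω|. Let n ≥ 1 and m be natural numbers with |I| ≤ 2^n and m ≥ 2n. Then 3 · |{ r : Fin m → Ω | ∃ i : I, ∀ j : Fin m, r j ∈ B i }| < |Ω|^m. -/
/-- Union bound: the number of `m`-tuples lying entirely in some `B i` is at most
`∑ i, |B i| ^ m`. -/
theorem card_exists_forall_mem_le_sum {Ω I : Type*} [Fintype Ω] [DecidableEq Ω] [Fintype I]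
    (B : I → Finset Ω) (m : ℕ) :
    Fintype.card { r : Fin m → Ω // ∃ i : I, ∀ j : Fin m, r j ∈ B i } ≤ ∑ i, (B i).card ^ m := by
  calc Fintype.card { r : Fin m → Ω // ∃ i : I, ∀ j : Fin m, r j ∈ B i }
      = (Finset.univ.biUnion fun i => Fintype.piFinset fun _ : Fin m => B i).card :=
        Fintype.card_of_subtype _ (by simp)
    _ ≤ ∑ i, (Fintype.piFinset fun _ : Fin m => B i).card := Finset.card_biUnion_le
    _ = ∑ i, (B i).card ^ m := by simp

theorem three_mul_two_pow_lt_three_pow {n m : ℕ} (hn : 1 ≤ n) (hm : 2 * n ≤ m) :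
    3 * 2 ^ n < 3 ^ m := by
  have h : 3 * 2 ^ n < 9 ^ n := by
    induction n, hn using Nat.le_induction with
    | base => norm_num
    | succ k hk ih => have := ih (by omega); rw [pow_succ, pow_succ]; omega
  calc 3 * 2 ^ n < 9 ^ n := h
    _ = 3 ^ (2 * n) := by rw [pow_mul]; norm_num
    _ ≤ 3 ^ m := Nat.pow_le_pow_right (by norm_num) hm

/-- Hitting-set bound: with at most `2^n` inputs, each with a bad set of density at most `1/3`,
fewer than a third of all `m`-tuples (`m ≥ 2n`, `n ≥ 1`) are entirely bad for some input. -/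
theorem hitting_set_bound {Ω I : Type*} [Fintype Ω] [DecidableEq Ω] [Nonempty Ω] [Fintype I]
    (B : I → Finset Ω) (hB : ∀ i : I, 3 * (B i).card ≤ Fintype.card Ω)
    (n m : ℕ) (hn : 1 ≤ n) (hI : Fintype.card I ≤ 2 ^ n) (hm : 2 * n ≤ m) :
    3 * Fintype.card { r : Fin m → Ω // ∃ i : I, ∀ j : Fin m, r j ∈ B i }
      < Fintype.card Ω ^ m := by
  have hΩ : 0 < Fintype.card Ω ^ m := pow_pos Fintype.card_pos m
  refine lt_of_mul_lt_mul_left (a := 3 ^ m) ?_ (Nat.zero_le _)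
  calc 3 ^ m * (3 * Fintype.card { r : Fin m → Ω // ∃ i : I, ∀ j : Fin m, r j ∈ B i })
      ≤ 3 ^ m * (3 * ∑ i, (B i).card ^ m) := by
        gcongr
        exact card_exists_forall_mem_le_sum B m
    _ = 3 * ∑ i, (3 * (B i).card) ^ m := by
        simp only [mul_pow, ← Finset.mul_sum]
        ring
    _ ≤ 3 * ∑ _i : I, Fintype.card Ω ^ m := by
        gcongr with i
        exact hB i
    _ = 3 * Fintype.card I * Fintype.card Ω ^ m := by simp [mul_assoc]
    _ ≤ 3 * 2 ^ n * Fintype.card Ω ^ m := by gcongr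
    _ < 3 ^ m * Fintype.card Ω ^ m :=
        Nat.mul_lt_mul_of_pos_right (three_mul_two_pow_lt_three_pow hn hm) hΩ
end

section
/- Let X be a finite type, let K and B be natural numbers with B ≥ 1, and let π : X → Fin K be a map each of whose fibers has exactly B elements. Let F be a finite set of functions from X to Bool with |F| < 2^B. Then there exists a function g : X → Bool such that for every f ∈ F and every block index b : Fin K there is some x : X with π x = b and g x ≠ f x. Consequently, every f ∈ F differs from g on at least K points of X. -/
/-- Block diagonalization: if `X` is partitioned by `π` into `K` blocks of size `B ≥ 1` and
`F` is a family of fewer than `2^B` Boolean functions on `X`, then there is `g : X → Bool`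
disagreeing with every `f ∈ F` in every block, hence on at least `K` points. -/
theorem block_diagonalization {X : Type*} [Fintype X] (K B : ℕ) (hB : 1 ≤ B)
    (π : X → Fin K) (hπ : ∀ b : Fin K, (Finset.univ.filter fun x : X => π x = b).card = B)
    (F : Finset (X → Bool)) (hF : F.card < 2 ^ B) :
    ∃ g : X → Bool,
      (∀ f ∈ F, ∀ b : Fin K, ∃ x : X, π x = b ∧ g x ≠ f x) ∧
      ∀ f ∈ F, K ≤ (Finset.univ.filter fun x : X => g x ≠ f x).card := by
  classical
  have hblock (b : Fin K) :
      ∃ h : {x // π x = b} → Bool, h ∉ F.image fun f (x : {x // π x = b}) => f x := by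
    have hcard : Fintype.card ({x // π x = b} → Bool) = 2 ^ B := by
      rw [Fintype.card_fun, Fintype.card_bool, Fintype.card_subtype, hπ b]
    by_contra! hall
    have huniv := Finset.card_le_card fun h (_ : h ∈ Finset.univ) => hall h
    rw [Finset.card_univ, hcard] at huniv
    exact absurd (huniv.trans Finset.card_image_le) (not_le.mpr hF)
  choose h hh using hblock
  have hdiff : ∀ f ∈ F, ∀ b : Fin K, ∃ x : X, π x = b ∧ h (π x) ⟨x, rfl⟩ ≠ f x := by
    intro f hf b
    by_contra! hagree
    refine hh b (Finset.mem_image.mpr ⟨f, hf, funext ?_⟩)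
    rintro ⟨x, rfl⟩
    exact (hagree x rfl).symm
  refine ⟨fun x => h (π x) ⟨x, rfl⟩, hdiff, fun f hf => ?_⟩
  choose w hwπ hw using hdiff f hf
  have hinj : Function.Injective w := Function.LeftInverse.injective hwπ
  calc K = (Finset.univ.image w).card := by simp [Finset.card_image_of_injective _ hinj]
    _ ≤ _ := Finset.card_le_card fun x hx => by
      obtain ⟨b, -, rfl⟩ := Finset.mem_image.mp hx
      exact Finset.mem_filter.mpr ⟨Finset.mem_univ _, hw b⟩
end
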